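/- arXiv:2109.05768 — 4 statements merged into one kernel-verified Lean document; each statement's English description precedes it below -/
import Mathlib

section
/- Let (g_Σ)_{Σ ∈ SPD(n)} be the O(n)-invariant family of inner products on Sym(n) determined by functions γ, α : (0,∞)ⁿ → (0,∞) and β : (0,∞)ⁿ → ℝ satisfying the compatibility, positivity and symmetry conditions, via g_D(X,X) = Σ_i γ(d_i, d_{k≠i}) X_{ii}² + Σ_{i≠j} α(d_i, d_j, d_{k≠i,j}) X_{ij}² + Σ_{i≠j} β(d_i, d_j, d_{k≠i,j}) X_{ii} X_{jj} at positive diagonal D and g_Σ(X,X) = g_D(PᵀXP, PᵀXP) for Σ = PDPᵀ. Then g is invariant under inversion — meaning the inversion map Σ ↦ Σ⁻¹ is an isometry, i.e. g_{Σ⁻¹}(Σ⁻¹XΣ⁻¹, Σ⁻¹XΣ⁻¹) = g_Σ(X,X) for all Σ ∈ SPD(n) and X ∈ Sym(n) — if and only if γ(d₁⁻¹,…,d_n⁻¹) = d₁⁴·γ(d₁,…,d_n) and f(d₁⁻¹,…,d_n⁻¹) = d₁²d₂²·f(d₁,…,d_n) for each f ∈ {α, β} and all d ∈ (0,∞)ⁿ.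 -/
open Matrix Finset

/-- A vector in `ℝⁿ` is positive if all its entries are. -/
def PosVec {n : ℕ} (d : Fin n → ℝ) : Prop := ∀ i, 0 < d i

/-- The vector `(d_i, d_{k≠i})`: entries of `d` reordered so that `d i` comes first, the
remaining entries being the `d k` for `k ≠ i` (in some order). -/
def reord1 {n : ℕ} (hn : 2 ≤ n) (d : Fin n → ℝ) (i : Fin n) : Fin n → ℝ :=
  d ∘ (Equiv.swap (⟨0, by omega⟩ : Fin n) i)

/-- A permutation sending `0 ↦ i` and `1 ↦ j` (for `i ≠ j`). -/
def perm2 {n : ℕ} (hn : 2 ≤ n) (i j : Fin n) : Equiv.Perm (Fin n) :=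
  Equiv.swap (⟨0, by omega⟩ : Fin n) i *
    Equiv.swap (⟨1, by omega⟩ : Fin n) (Equiv.swap (⟨0, by omega⟩ : Fin n) i j)

/-- The vector `(d_i, d_j, d_{k≠i,j})`: entries of `d` reordered so that `d i, d j` come first,
the remaining entries being the `d k` for `k ≠ i,j` (in some order). -/
def reord2 {n : ℕ} (hn : 2 ≤ n) (d : Fin n → ℝ) (i j : Fin n) : Fin n → ℝ :=
  d ∘ (perm2 hn i j)

/-- `f` is `(1,n−1)`-symmetric: invariant under all permutations of its last `n−1` variables. -/
def Sym1n {n : ℕ} (hn : 2 ≤ n) (f : (Fin n → ℝ) → ℝ) : Prop :=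
  ∀ σ : Equiv.Perm (Fin n), σ ⟨0, by omega⟩ = (⟨0, by omega⟩ : Fin n) →
    ∀ d : Fin n → ℝ, PosVec d → f (d ∘ σ) = f d

/-- `f` is `(2,n−2)`-symmetric: invariant under all permutations of its first `2` variables and
of its last `n−2` variables. -/
def Sym2n {n : ℕ} (hn : 2 ≤ n) (f : (Fin n → ℝ) → ℝ) : Prop :=
  ∀ σ : Equiv.Perm (Fin n),
    ((σ ⟨0, by omega⟩ = (⟨0, by omega⟩ : Fin n) ∧ σ ⟨1, by omega⟩ = (⟨1, by omega⟩ : Fin n)) ∨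
     (σ ⟨0, by omega⟩ = (⟨1, by omega⟩ : Fin n) ∧ σ ⟨1, by omega⟩ = (⟨0, by omega⟩ : Fin n))) →
    ∀ d : Fin n → ℝ, PosVec d → f (d ∘ σ) = f d

/-- The symmetric matrix `S(d)` with `S_{ii}(d) = γ(d_i, d_{k≠i})` and
`S_{ij}(d) = β(d_i, d_j, d_{k≠i,j})` for `i ≠ j`. -/
def Smat {n : ℕ} (hn : 2 ≤ n) (γ β : (Fin n → ℝ) → ℝ) (d : Fin n → ℝ) :
    Matrix (Fin n) (Fin n) ℝ :=
  Matrix.of fun i j => if i = j then γ (reord1 hn d i) else β (reord2 hn d i j)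

/-- The compatibility condition: `γ = α + β` on `{d : d₁ = d₂}`. -/
def CompatCond {n : ℕ} (hn : 2 ≤ n) (γ α β : (Fin n → ℝ) → ℝ) : Prop :=
  ∀ d : Fin n → ℝ, PosVec d → d ⟨0, by omega⟩ = d ⟨1, by omega⟩ → γ d = α d + β d

/-- The positivity condition: `S(d)` is positive definite for every positive `d`. -/
def PositivityCond {n : ℕ} (hn : 2 ≤ n) (γ β : (Fin n → ℝ) → ℝ) : Prop :=
  ∀ d : Fin n → ℝ, PosVec d → (Smat hn γ β d).PosDef

/-- The bilinear form
`g_D(X,Y) = Σ_i γ(d_i,d_{k≠i}) X_{ii}Y_{ii} + Σ_{i≠j} α(d_i,d_j,d_{k≠i,j}) X_{ij}Y_{ij}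
 + Σ_{i≠j} β(d_i,d_j,d_{k≠i,j}) X_{ii}Y_{jj}` at the positive diagonal matrix `D = diag d`. -/
def gD {n : ℕ} (hn : 2 ≤ n) (γ α β : (Fin n → ℝ) → ℝ) (d : Fin n → ℝ)
    (X Y : Matrix (Fin n) (Fin n) ℝ) : ℝ :=
  (∑ i, γ (reord1 hn d i) * X i i * Y i i) +
  (∑ i, ∑ j, if i = j then 0 else α (reord2 hn d i j) * X i j * Y i j) +
  (∑ i, ∑ j, if i = j then 0 else β (reord2 hn d i j) * X i i * Y j j)

/-- Frobenius norm of a real matrix. -/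
noncomputable def frobNorm {n : ℕ} (A : Matrix (Fin n) (Fin n) ℝ) : ℝ :=
  Real.sqrt (∑ i, ∑ j, (A i j) ^ 2)

theorem gD_small {n : ℕ} (hn : 2 ≤ n) (γ α β : (Fin n → ℝ) → ℝ)
    (hαsym : Sym2n hn α) (hβsym : Sym2n hn β) (d : Fin n → ℝ) (hd : PosVec d)
    (a b : Fin n) (ha : a = ⟨0, by omega⟩) (hb : b = ⟨1, by omega⟩)
    (X : Matrix (Fin n) (Fin n) ℝ)
    (hX1 : ∀ i j, i ≠ a → i ≠ b → X i j = 0) (hX2 : ∀ i j, j ≠ a → j ≠ b → X i j = 0) :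
    gD hn γ α β d X X = γ d * X a a ^ 2 + γ (reord1 hn d b) * X b b ^ 2
      + α d * X a b ^ 2 + α d * X b a ^ 2 + 2 * β d * X a a * X b b := by
  have hab : a ≠ b := by subst ha hb; simp
  have h1 : reord1 hn d a = d := by subst ha; simp [reord1]
  have h2 : reord2 hn d a b = d := by subst ha hb; simp [reord2, perm2]
  have h3 : ∀ f, Sym2n hn f → f (reord2 hn d b a) = f d := by
    intro f hf
    subst ha hb
    apply hf _ _ d hd
    right
    simp [perm2]
  have e1 : (∑ i, γ (reord1 hn d i) * X i i * X i i)
      = γ d * X a a ^ 2 + γ (reord1 hn d b) * X b b ^ 2 := by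
    rw [Fintype.sum_eq_add a b hab]
    · rw [h1]; ring
    · rintro x ⟨hx, hx'⟩; rw [hX1 x x hx hx']; ring
  have e2 : (∑ i, ∑ j, if i = j then 0 else α (reord2 hn d i j) * X i j * X i j)
      = α d * X a b ^ 2 + α d * X b a ^ 2 := by
    rw [Fintype.sum_eq_add a b hab]
    · rw [Fintype.sum_eq_add a b hab, Fintype.sum_eq_add a b hab]
      · rw [if_pos rfl, if_pos rfl, if_neg hab, if_neg hab.symm, h2, h3 α hαsym]; ring
      · rintro x ⟨hx, hx'⟩; rw [hX2 _ x hx hx']; simp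
      · rintro x ⟨hx, hx'⟩; rw [hX2 _ x hx hx']; simp
    · rintro x ⟨hx, hx'⟩
      apply Finset.sum_eq_zero
      intro j _
      rw [hX1 x j hx hx']; simp
  have e3 : (∑ i, ∑ j, if i = j then 0 else β (reord2 hn d i j) * X i i * X j j)
      = 2 * β d * X a a * X b b := by
    rw [Fintype.sum_eq_add a b hab]
    · rw [Fintype.sum_eq_add a b hab, Fintype.sum_eq_add a b hab]
      · rw [if_pos rfl, if_pos rfl, if_neg hab, if_neg hab.symm, h2, h3 β hβsym]; ring
      · rintro x ⟨hx, hx'⟩; rw [hX2 x x hx hx']; simp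
      · rintro x ⟨hx, hx'⟩; rw [hX2 x x hx hx']; simp
    · rintro x ⟨hx, hx'⟩
      apply Finset.sum_eq_zero
      intro j _
      rw [hX1 x x hx hx']; simp
  unfold gD
  rw [e1, e2, e3]; ring

theorem inv_conj {n : ℕ} (P : Matrix (Fin n) (Fin n) ℝ) (d : Fin n → ℝ)
    (hP : P * Pᵀ = 1) (hd : PosVec d) :
    (P * Matrix.diagonal d * Pᵀ)⁻¹ = P * Matrix.diagonal (fun i => (d i)⁻¹) * Pᵀ := by
  have hP' : Pᵀ * P = 1 := mul_eq_one_comm.mp hP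
  apply Matrix.inv_eq_right_inv
  have hD : Matrix.diagonal d * Matrix.diagonal (fun i => (d i)⁻¹) = 1 := by
    rw [Matrix.diagonal_mul_diagonal, ← Matrix.diagonal_one]
    congr 1; ext i; exact mul_inv_cancel₀ (hd i).ne'
  calc _ = P * Matrix.diagonal d * (Pᵀ * P) * Matrix.diagonal (fun i => (d i)⁻¹) * Pᵀ := by
        simp only [Matrix.mul_assoc]
    _ = P * (Matrix.diagonal d * Matrix.diagonal (fun i => (d i)⁻¹)) * Pᵀ := by
        rw [hP']; simp only [Matrix.mul_assoc, Matrix.mul_one, Matrix.one_mul]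
    _ = 1 := by rw [hD, Matrix.mul_one, hP]

/-- Value of the pulled back metric. -/
theorem g_inv {n : ℕ} (hn : 2 ≤ n)
    (γ α β : (Fin n → ℝ) → ℝ)
    (g : Matrix (Fin n) (Fin n) ℝ → Matrix (Fin n) (Fin n) ℝ → ℝ)
    (hg : ∀ (P : Matrix (Fin n) (Fin n) ℝ) (d : Fin n → ℝ), P * Pᵀ = 1 → PosVec d →
      ∀ X : Matrix (Fin n) (Fin n) ℝ, X.IsSymm →
        g (P * Matrix.diagonal d * Pᵀ) X = gD hn γ α β d (Pᵀ * X * P) (Pᵀ * X * P))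
    (P : Matrix (Fin n) (Fin n) ℝ) (d : Fin n → ℝ) (hP : P * Pᵀ = 1) (hd : PosVec d)
    (X : Matrix (Fin n) (Fin n) ℝ) (hX : X.IsSymm) :
    g (P * Matrix.diagonal d * Pᵀ)⁻¹
      ((P * Matrix.diagonal d * Pᵀ)⁻¹ * X * (P * Matrix.diagonal d * Pᵀ)⁻¹) =
    gD hn γ α β (fun i => (d i)⁻¹)
      (Matrix.of fun i j => (d i)⁻¹ * (Pᵀ * X * P) i j * (d j)⁻¹)
      (Matrix.of fun i j => (d i)⁻¹ * (Pᵀ * X * P) i j * (d j)⁻¹) := by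
  have hP' : Pᵀ * P = 1 := mul_eq_one_comm.mp hP
  rw [inv_conj P d hP hd]
  rw [hg P _ hP (fun i => inv_pos.mpr (hd i))]
  · have : Pᵀ * (P * Matrix.diagonal (fun i => (d i)⁻¹) * Pᵀ * X *
        (P * Matrix.diagonal (fun i => (d i)⁻¹) * Pᵀ)) * P =
        (Matrix.of fun i j => (d i)⁻¹ * (Pᵀ * X * P) i j * (d j)⁻¹) := by
      calc _ = (Pᵀ * P) * Matrix.diagonal (fun i => (d i)⁻¹) * (Pᵀ * X * P) *
          Matrix.diagonal (fun i => (d i)⁻¹) * (Pᵀ * P) := by simp only [Matrix.mul_assoc]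
        _ = _ := by
          rw [hP', Matrix.one_mul, Matrix.mul_one]
          ext i j
          rw [Matrix.mul_diagonal, Matrix.diagonal_mul, Matrix.of_apply]
    rw [this]
  · unfold Matrix.IsSymm at *
    simp only [Matrix.transpose_mul, Matrix.transpose_transpose, Matrix.diagonal_transpose, hX,
      Matrix.mul_assoc]

/-- the `O(n)`-invariant metric `g` determined by `γ, α, β` is invariant under
inversion (`g_{Σ⁻¹}(Σ⁻¹XΣ⁻¹, Σ⁻¹XΣ⁻¹) = g_Σ(X,X)`) iff `γ(d⁻¹) = d₁⁴ γ(d)` and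
`f(d⁻¹) = d₁² d₂² f(d)` for `f ∈ {α, β}` and all positive `d`. -/
theorem o_n_invariant_metric_inversion_invariance (n : ℕ) (hn : 2 ≤ n)
    (γ α β : (Fin n → ℝ) → ℝ)
    (hγpos : ∀ d, PosVec d → 0 < γ d) (hαpos : ∀ d, PosVec d → 0 < α d)
    (hcompat : CompatCond hn γ α β) (hposS : PositivityCond hn γ β)
    (hγsym : Sym1n hn γ) (hαsym : Sym2n hn α) (hβsym : Sym2n hn β)
    (g : Matrix (Fin n) (Fin n) ℝ → Matrix (Fin n) (Fin n) ℝ → ℝ)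
    (hg : ∀ (P : Matrix (Fin n) (Fin n) ℝ) (d : Fin n → ℝ), P * Pᵀ = 1 → PosVec d →
      ∀ X : Matrix (Fin n) (Fin n) ℝ, X.IsSymm →
        g (P * Matrix.diagonal d * Pᵀ) X = gD hn γ α β d (Pᵀ * X * P) (Pᵀ * X * P)) :
    (∀ Sig : Matrix (Fin n) (Fin n) ℝ, Sig.PosDef →
      ∀ X : Matrix (Fin n) (Fin n) ℝ, X.IsSymm →
        g Sig⁻¹ (Sig⁻¹ * X * Sig⁻¹) = g Sig X) ↔
    (∀ d : Fin n → ℝ, PosVec d →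
      γ (fun i => (d i)⁻¹) = (d ⟨0, by omega⟩) ^ 4 * γ d ∧
      α (fun i => (d i)⁻¹) = (d ⟨0, by omega⟩) ^ 2 * (d ⟨1, by omega⟩) ^ 2 * α d ∧
      β (fun i => (d i)⁻¹) = (d ⟨0, by omega⟩) ^ 2 * (d ⟨1, by omega⟩) ^ 2 * β d) := by
  constructor
  · intro H d hd
    obtain ⟨a, ha⟩ : ∃ a : Fin n, a = ⟨0, by omega⟩ := ⟨_, rfl⟩
    obtain ⟨b, hb⟩ : ∃ b : Fin n, b = ⟨1, by omega⟩ := ⟨_, rfl⟩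
    rw [← ha, ← hb]
    have hab : a ≠ b := by subst ha hb; simp
    have key : ∀ p q r : ℝ,
        γ (fun i => (d i)⁻¹) * ((d a)⁻¹ * p * (d a)⁻¹) ^ 2
          + γ (reord1 hn (fun i => (d i)⁻¹) b) * ((d b)⁻¹ * r * (d b)⁻¹) ^ 2
          + α (fun i => (d i)⁻¹) * ((d a)⁻¹ * q * (d b)⁻¹) ^ 2
          + α (fun i => (d i)⁻¹) * ((d b)⁻¹ * q * (d a)⁻¹) ^ 2
          + 2 * β (fun i => (d i)⁻¹) * ((d a)⁻¹ * p * (d a)⁻¹) * ((d b)⁻¹ * r * (d b)⁻¹)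
        = γ d * p ^ 2 + γ (reord1 hn d b) * r ^ 2 + α d * q ^ 2 + α d * q ^ 2
          + 2 * β d * p * r := by
      intro p q r
      let X : Matrix (Fin n) (Fin n) ℝ := Matrix.of fun i j =>
        if i = a ∧ j = a then p else if i = b ∧ j = b then r else
          if (i = a ∧ j = b) ∨ (i = b ∧ j = a) then q else 0
      have hXs : X.IsSymm := by
        ext i j
        simp only [X, Matrix.transpose_apply, Matrix.of_apply]
        congr 1
        · simp only [and_comm]
        · congr 1
          · simp only [and_comm]
          · congr 1
            apply propext; tauto
      have hX1 : ∀ i j, i ≠ a → i ≠ b → X i j = 0 := by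
        intro i j h1 h2; simp [X, h1, h2]
      have hX2 : ∀ i j, j ≠ a → j ≠ b → X i j = 0 := by
        intro i j h1 h2; simp [X, h1, h2]
      have haa : X a a = p := by simp [X]
      have hbb : X b b = r := by simp [X, hab.symm]
      have hab' : X a b = q := by simp [X, hab, hab.symm]
      have hba' : X b a = q := by simp [X, hab, hab.symm]
      have h1 : (1 : Matrix (Fin n) (Fin n) ℝ) * (1 : Matrix (Fin n) (Fin n) ℝ)ᵀ = 1 := by simp
      have hpd : ((1 : Matrix (Fin n) (Fin n) ℝ) * Matrix.diagonal d * 1ᵀ).PosDef := by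
        simpa using Matrix.PosDef.diagonal hd
      have := H _ hpd X hXs
      rw [g_inv hn γ α β g hg 1 d h1 hd X hXs, hg 1 d h1 hd X hXs] at this
      simp only [Matrix.transpose_one, Matrix.one_mul, Matrix.mul_one] at this
      rw [gD_small hn γ α β hαsym hβsym d hd a b ha hb X hX1 hX2,
        gD_small hn γ α β hαsym hβsym _ (fun i => inv_pos.mpr (hd i)) a b ha hb] at this
      · simpa only [Matrix.of_apply, haa, hbb, hab', hba'] using this
      · intro i j h1 h2; simp [hX1 i j h1 h2]
      · intro i j h1 h2; simp [hX2 i j h1 h2]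
    have pa := (hd a).ne'
    have pb := (hd b).ne'
    have k1 := key 1 0 0
    have k2 := key 0 1 0
    have k3 := key 0 0 1
    have k4 := key 1 0 1
    have kβ : β (fun i => (d i)⁻¹) * ((d a)⁻¹ * 1 * (d a)⁻¹) * ((d b)⁻¹ * 1 * (d b)⁻¹) = β d := by
      linarith
    have kα : α (fun i => (d i)⁻¹) * ((d a)⁻¹ * 1 * (d b)⁻¹) ^ 2 = α d := by
      have : ((d b)⁻¹ * 1 * (d a)⁻¹) ^ 2 = ((d a)⁻¹ * 1 * (d b)⁻¹) ^ 2 := by ring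
      rw [this] at k2
      linarith
    have kγ : γ (fun i => (d i)⁻¹) * ((d a)⁻¹ * 1 * (d a)⁻¹) ^ 2 = γ d := by
      linarith
    refine ⟨?_, ?_, ?_⟩
    · rw [← kγ]; field_simp
    · rw [← kα]; field_simp
    · rw [← kβ]; field_simp
  · intro H Sig hS X hX
    obtain ⟨P, d, hP, hd, rfl⟩ : ∃ (P : Matrix (Fin n) (Fin n) ℝ) (d : Fin n → ℝ),
        P * Pᵀ = 1 ∧ PosVec d ∧ Sig = P * Matrix.diagonal d * Pᵀ := by
      refine ⟨hS.1.eigenvectorUnitary, hS.1.eigenvalues, ?_, hS.eigenvalues_pos, ?_⟩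
      · have := (Matrix.mem_unitaryGroup_iff).mp hS.1.eigenvectorUnitary.2
        rwa [Matrix.star_eq_conjTranspose, Matrix.conjTranspose_eq_transpose_of_trivial] at this
      · have := hS.1.spectral_theorem
        rw [Unitary.conjStarAlgAut_apply, Matrix.star_eq_conjTranspose,
          Matrix.conjTranspose_eq_transpose_of_trivial] at this
        exact this
    rw [g_inv hn γ α β g hg P d hP hd X hX, hg P d hP hd X hX]
    generalize Pᵀ * X * P = Y
    have hγ : ∀ i, γ (reord1 hn (fun i => (d i)⁻¹) i) = d i ^ 4 * γ (reord1 hn d i) := by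
      intro i
      have := (H (reord1 hn d i) (fun k => hd _)).1
      have e : reord1 hn d i ⟨0, by omega⟩ = d i := by simp [reord1]
      rw [e] at this
      exact this
    have e2 : ∀ i j, i ≠ j → reord2 hn d i j ⟨0, by omega⟩ = d i ∧
        reord2 hn d i j ⟨1, by omega⟩ = d j := by
      intro i j hij
      refine ⟨?_, by simp [reord2, perm2]⟩
      simp only [reord2, perm2, Function.comp, Equiv.Perm.mul_apply]
      have h0 : Equiv.swap (⟨1, by omega⟩ : Fin n) (Equiv.swap (⟨0, by omega⟩ : Fin n) i j)
          ⟨0, by omega⟩ = ⟨0, by omega⟩ := by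
        apply Equiv.swap_apply_of_ne_of_ne
        · simp
        · intro h
          have := congrArg (Equiv.swap (⟨0, by omega⟩ : Fin n) i) h
          simp at this
          exact hij this
      rw [h0, Equiv.swap_apply_left]
    have hα : ∀ i j, i ≠ j → α (reord2 hn (fun i => (d i)⁻¹) i j)
        = d i ^ 2 * d j ^ 2 * α (reord2 hn d i j) := by
      intro i j hij
      have := (H (reord2 hn d i j) (fun k => hd _)).2.1
      rw [(e2 i j hij).1, (e2 i j hij).2] at this
      exact this
    have hβ : ∀ i j, i ≠ j → β (reord2 hn (fun i => (d i)⁻¹) i j)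
        = d i ^ 2 * d j ^ 2 * β (reord2 hn d i j) := by
      intro i j hij
      have := (H (reord2 hn d i j) (fun k => hd _)).2.2
      rw [(e2 i j hij).1, (e2 i j hij).2] at this
      exact this
    have hne : ∀ i, d i ≠ 0 := fun i => (hd i).ne'
    unfold gD
    simp only [Matrix.of_apply]
    congr 1
    · congr 1
      · refine Finset.sum_congr rfl fun i _ => ?_
        have := hne i
        rw [hγ]; field_simp
      · refine Finset.sum_congr rfl fun i _ => Finset.sum_congr rfl fun j _ => ?_
        have := hne i
        have := hne j
        split_ifs with h
        · rfl
        · rw [hα i j h]; field_simp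
    · refine Finset.sum_congr rfl fun i _ => Finset.sum_congr rfl fun j _ => ?_
      have := hne i
      have := hne j
      split_ifs with h
      · rfl
      · rw [hβ i j h]; field_simp
end

section
/- Let x, y ∈ ℝⁿ and let Δ be a positive diagonal n×n matrix. Then the symmetric matrix S = Δ(Iₙ + ½(xyᵀ + yxᵀ))Δ is positive definite if and only if ‖x‖·‖y‖ − ⟨x,y⟩ < 2 (where ⟨·,·⟩ and ‖·‖ are the Euclidean inner product and norm on ℝⁿ). Equivalently, the nonzero eigenvalues of xyᵀ + yxᵀ are ⟨x,y⟩ + ‖x‖‖y‖ and ⟨x,y⟩ − ‖x‖‖y‖, and Iₙ + ½(xyᵀ + yxᵀ) is positive definite precisely under this condition. -/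
open Matrix Finset

/-- Euclidean inner product on `ℝⁿ`. -/
def dotR {n : ℕ} (x y : Fin n → ℝ) : ℝ := ∑ i, x i * y i

/-- Euclidean norm on `ℝⁿ`. -/
noncomputable def nrmR {n : ℕ} (x : Fin n → ℝ) : ℝ := Real.sqrt (dotR x x)

theorem aux_add {n : ℕ} (x y z : Fin n → ℝ) : dotR x (y + z) = dotR x y + dotR x z := by
  simp [dotR, mul_add, Finset.sum_add_distrib]

theorem aux_smul {n : ℕ} (x y : Fin n → ℝ) (a : ℝ) : dotR x (a • y) = a * dotR x y := by
  simp only [dotR, Finset.mul_sum, Pi.smul_apply, smul_eq_mul]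
  exact Finset.sum_congr rfl fun i _ => by ring

theorem aux_comm {n : ℕ} (x y : Fin n → ℝ) : dotR x y = dotR y x := by
  simp only [dotR]
  exact Finset.sum_congr rfl fun i _ => by ring

theorem aux_add' {n : ℕ} (x y z : Fin n → ℝ) : dotR (y + z) x = dotR y x + dotR z x := by
  rw [aux_comm, aux_add, aux_comm x y, aux_comm x z]

theorem aux_smul' {n : ℕ} (x y : Fin n → ℝ) (a : ℝ) : dotR (a • y) x = a * dotR y x := by
  rw [aux_comm, aux_smul, aux_comm x y]

theorem aux_nonneg {n : ℕ} (x : Fin n → ℝ) : 0 ≤ dotR x x :=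
  Finset.sum_nonneg fun i _ => mul_self_nonneg _

theorem aux_zero {n : ℕ} (x : Fin n → ℝ) (h : dotR x x = 0) : x = 0 := by
  have := (Finset.sum_eq_zero_iff_of_nonneg (fun i _ => mul_self_nonneg (x i))).1 h
  funext i
  simpa using this i (Finset.mem_univ i)

theorem aux_pos {n : ℕ} (x : Fin n → ℝ) (h : x ≠ 0) : 0 < dotR x x :=
  lt_of_le_of_ne (aux_nonneg x) fun h' => h (aux_zero x h'.symm)

theorem aux_nrm {n : ℕ} (x : Fin n → ℝ) : nrmR x * nrmR x = dotR x x :=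
  Real.mul_self_sqrt (aux_nonneg x)

theorem aux_cs {n : ℕ} (x y : Fin n → ℝ) : dotR x y ^ 2 ≤ dotR x x * dotR y y := by
  have := Finset.sum_mul_sq_le_sq_mul_sq Finset.univ x y
  simpa [dotR, pow_two] using this

theorem aux_mulVec {n : ℕ} (x y v : Fin n → ℝ) :
    (Matrix.vecMulVec x y + Matrix.vecMulVec y x) *ᵥ v = dotR y v • x + dotR x v • y := by
  funext i
  simp [Matrix.add_mulVec, Matrix.vecMulVec_mulVec, dotProduct, dotR, mul_comm]

theorem aux_eig {n : ℕ} (x y : Fin n → ℝ) (p q : ℝ) (hp : p * p = dotR x x)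
    (hq : q * q = dotR y y) (h : dotR x y + p * q ≠ 0) :
    ∃ v : Fin n → ℝ, v ≠ 0 ∧
      (Matrix.vecMulVec x y + Matrix.vecMulVec y x) *ᵥ v = (dotR x y + p * q) • v := by
  refine ⟨q • x + p • y, ?_, ?_⟩
  · intro h0
    have h1 : dotR y (q • x + p • y) = 0 := by rw [h0]; simp [dotR]
    rw [aux_add, aux_smul, aux_smul, ← hq, aux_comm y x] at h1
    have h2 : q * (dotR x y + p * q) = 0 := by linarith
    have h3 : q = 0 := (mul_eq_zero.1 h2).resolve_right h
    have h4 : y = 0 := aux_zero y (by rw [← hq, h3]; simp)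
    apply h
    rw [h3, h4]; simp [dotR]
  · rw [aux_mulVec]
    simp only [aux_add, aux_smul, ← hp, ← hq, aux_comm y x]
    funext i
    simp
    ring

theorem aux_quad {n : ℕ} (x y v : Fin n → ℝ) :
    star v ⬝ᵥ ((1 + (1 / 2 : ℝ) • (Matrix.vecMulVec x y + Matrix.vecMulVec y x)) *ᵥ v)
      = dotR v v + dotR x v * dotR y v := by
  have h : star v ⬝ᵥ ((1 + (1 / 2 : ℝ) • (Matrix.vecMulVec x y + Matrix.vecMulVec y x)) *ᵥ v)
      = dotR v (v + (1 / 2 : ℝ) • (dotR y v • x + dotR x v • y)) := by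
    rw [Matrix.add_mulVec, Matrix.one_mulVec, Matrix.smul_mulVec, aux_mulVec]
    simp [dotR, dotProduct]
  rw [h]
  simp only [aux_add, aux_smul, aux_comm v x, aux_comm v y]
  ring

theorem aux_lower {n : ℕ} (x y v : Fin n → ℝ) :
    -((nrmR x * nrmR y - dotR x y) / 2 * dotR v v) ≤ dotR x v * dotR y v := by
  have hp := aux_nrm x
  have hq := aux_nrm y
  have hp0 : 0 ≤ nrmR x := Real.sqrt_nonneg _
  have hq0 : 0 ≤ nrmR y := Real.sqrt_nonneg _
  set p := nrmR x
  set q := nrmR y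
  rcases hp0.eq_or_lt with h | h
  · have : x = 0 := aux_zero x (by rw [← hp, ← h]; simp)
    rw [this, ← h]; simp [dotR]
  rcases hq0.eq_or_lt with h' | h'
  · have : y = 0 := aux_zero y (by rw [← hq, ← h']; simp)
    rw [this, ← h']; simp [dotR]
  have hpq : 0 < p * q := mul_pos h h'
  have cs := aux_cs (q • x + (-p) • y) v
  simp only [aux_add, aux_add', aux_smul, aux_smul', ← hp, ← hq, aux_comm y x] at cs
  refine le_of_mul_le_mul_left ?_ hpq
  nlinarith [sq_nonneg (q * dotR x v + p * dotR y v)]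

theorem aux_posDef {n : ℕ} (x y : Fin n → ℝ) :
    (1 + (1 / 2 : ℝ) • (Matrix.vecMulVec x y + Matrix.vecMulVec y x)).PosDef ↔
      nrmR x * nrmR y - dotR x y < 2 := by
  constructor
  · intro h
    by_contra! hc
    obtain ⟨v, hv, he⟩ := aux_eig x y (-nrmR x) (nrmR y) (by simpa using aux_nrm x) (aux_nrm y)
      (by intro h0; linarith)
    have h1 := h.dotProduct_mulVec_pos hv
    rw [aux_quad] at h1
    rw [aux_mulVec] at he
    have h2 := congrArg (dotR v) he
    simp only [aux_add, aux_smul, aux_comm v x, aux_comm v y] at h2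
    nlinarith [aux_pos v hv]
  · intro h
    refine Matrix.PosDef.of_dotProduct_mulVec_pos ?_ ?_
    · ext i j
      simp [Matrix.vecMulVec_apply, Matrix.one_apply, eq_comm]
      ring
    · intro v hv
      rw [aux_quad]
      nlinarith [aux_pos v hv, aux_lower x y v]

theorem aux_eig' {n : ℕ} (x y v : Fin n → ℝ) (μ : ℝ) (hv : v ≠ 0)
    (h : (Matrix.vecMulVec x y + Matrix.vecMulVec y x) *ᵥ v = μ • v) :
    μ = 0 ∨ μ = dotR x y + nrmR x * nrmR y ∨ μ = dotR x y - nrmR x * nrmR y := by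
  rw [aux_mulVec] at h
  have hx := congrArg (dotR x) h
  have hy := congrArg (dotR y) h
  simp only [aux_add, aux_smul, aux_comm y x, ← aux_nrm] at hx hy
  set p := nrmR x
  set q := nrmR y
  set a := dotR x v
  set b := dotR y v
  set c := dotR x y
  have ha : ((μ - (c + p * q)) * (μ - (c - p * q))) * a = 0 := by
    linear_combination -(μ - c) * hx - p * p * hy
  have hb : ((μ - (c + p * q)) * (μ - (c - p * q))) * b = 0 := by
    linear_combination -(μ - c) * hy - q * q * hx
  by_cases hk : (μ - (c + p * q)) * (μ - (c - p * q)) = 0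
  · rcases mul_eq_zero.1 hk with h1 | h1
    · right; left; linarith
    · right; right; linarith
  · left
    have ha' := (mul_eq_zero.1 ha).resolve_left hk
    have hb' := (mul_eq_zero.1 hb).resolve_left hk
    rw [ha', hb'] at h
    simp at h
    exact (smul_eq_zero.1 h.symm).resolve_right hv

/-- `S = Δ(Iₙ + ½(xyᵀ + yxᵀ))Δ` is positive definite iff
`‖x‖‖y‖ − ⟨x,y⟩ < 2`; equivalently, the nonzero eigenvalues of `M = xyᵀ + yxᵀ` are
`⟨x,y⟩ ± ‖x‖‖y‖` and `Iₙ + ½M` is positive definite precisely under this condition. -/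
theorem separable_trace_term_posdef_iff (n : ℕ) (x y t : Fin n → ℝ) (ht : ∀ i, 0 < t i)
    (M S : Matrix (Fin n) (Fin n) ℝ)
    (hM : M = Matrix.vecMulVec x y + Matrix.vecMulVec y x)
    (hS : S = Matrix.diagonal t * (1 + (1 / 2 : ℝ) • M) * Matrix.diagonal t) :
    (S.PosDef ↔ nrmR x * nrmR y - dotR x y < 2) ∧
    ((1 + (1 / 2 : ℝ) • M).PosDef ↔ nrmR x * nrmR y - dotR x y < 2) ∧
    (∀ μ : ℝ, (∃ v : Fin n → ℝ, v ≠ 0 ∧ M *ᵥ v = μ • v) →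
      μ = 0 ∨ μ = dotR x y + nrmR x * nrmR y ∨ μ = dotR x y - nrmR x * nrmR y) ∧
    (dotR x y + nrmR x * nrmR y ≠ 0 →
      ∃ v : Fin n → ℝ, v ≠ 0 ∧ M *ᵥ v = (dotR x y + nrmR x * nrmR y) • v) ∧
    (dotR x y - nrmR x * nrmR y ≠ 0 →
      ∃ v : Fin n → ℝ, v ≠ 0 ∧ M *ᵥ v = (dotR x y - nrmR x * nrmR y) • v) := by
  subst hM
  refine ⟨?_, aux_posDef x y, ?_, ?_, ?_⟩
  · rw [← aux_posDef x y, hS]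
    have hu : IsUnit (Matrix.diagonal t) := by
      rw [Matrix.isUnit_diagonal, Pi.isUnit_iff]
      exact fun i => (ht i).ne'.isUnit
    have hs : star (Matrix.diagonal t) = Matrix.diagonal t := by
      rw [Matrix.star_eq_conjTranspose, Matrix.diagonal_conjTranspose]
      simp
    have := Matrix.IsUnit.posDef_star_left_conjugate_iff
      (x := 1 + (1 / 2 : ℝ) • (Matrix.vecMulVec x y + Matrix.vecMulVec y x)) hu
    rwa [hs] at this
  · rintro μ ⟨v, hv, h⟩
    exact aux_eig' x y v μ hv h
  · exact aux_eig x y _ _ (aux_nrm x) (aux_nrm y)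
  · intro h
    have := aux_eig x y (-nrmR x) (nrmR y) (by simpa using aux_nrm x) (aux_nrm y)
    rw [neg_mul, ← sub_eq_add_neg] at this
    exact this h
end

section
/- Let x, y ∈ ℝⁿ with ‖x‖·‖y‖ − ⟨x,y⟩ < 2, let Δ be a positive diagonal n×n matrix, and set S = Δ(Iₙ + ½(xyᵀ + yxᵀ))Δ and c = 1 + ⟨x,y⟩ − ¼(‖x‖²‖y‖² − ⟨x,y⟩²). Then c > 0, S is invertible, and S⁻¹ = Δ⁻¹[Iₙ − (1/(4c))(2 + ⟨x,y⟩)(xyᵀ + yxᵀ) + (1/(4c))(‖y‖² xxᵀ + ‖x‖² yyᵀ)]Δ⁻¹. -/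
open Matrix Finset

theorem vmv_mul {n : ℕ} (a b c d : Fin n → ℝ) :
    Matrix.vecMulVec a b * Matrix.vecMulVec c d = dotR b c • Matrix.vecMulVec a d := by
  ext i j
  simp only [Matrix.mul_apply, Matrix.vecMulVec_apply, Matrix.smul_apply, smul_eq_mul, dotR,
    Finset.sum_mul]
  exact Finset.sum_congr rfl fun k _ => by ring

theorem core_mul {n : ℕ} (x y : Fin n → ℝ) (c b : ℝ)
    (hc : c = 1 + dotR x y - (1 / 4) * (dotR x x * dotR y y - dotR x y ^ 2))
    (hb : 4 * c * b = 1) :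
    (1 + (1 / 2 : ℝ) • (Matrix.vecMulVec x y + Matrix.vecMulVec y x)) *
      (1 - (b * (2 + dotR x y)) • (Matrix.vecMulVec x y + Matrix.vecMulVec y x)
        + b • (dotR y y • Matrix.vecMulVec x x + dotR x x • Matrix.vecMulVec y y)) = 1 := by
  have hyx : dotR y x = dotR x y := by
    simp only [dotR]; exact Finset.sum_congr rfl fun k _ => by ring
  simp only [add_mul, mul_add, mul_sub, one_mul, mul_one, smul_mul_assoc, mul_smul_comm,
    vmv_mul, hyx, smul_add]
  ext i j
  simp only [Matrix.add_apply, Matrix.sub_apply, Matrix.smul_apply, smul_eq_mul,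
    Matrix.vecMulVec_apply]
  subst hc
  linear_combination (-(1 / 2 : ℝ) * (x i * y j + y i * x j)) * hb

/-- inverse of the bivariate separable matrix `S = Δ(Iₙ + ½(xyᵀ + yxᵀ))Δ`:
with `c = 1 + ⟨x,y⟩ − ¼(‖x‖²‖y‖² − ⟨x,y⟩²)` one has `c > 0`, `S` is invertible, and
`S⁻¹ = Δ⁻¹[Iₙ − (2+⟨x,y⟩)/(4c)·(xyᵀ+yxᵀ) + 1/(4c)·(‖y‖²xxᵀ + ‖x‖²yyᵀ)]Δ⁻¹`. -/
theorem separable_trace_term_inverse (n : ℕ) (x y t : Fin n → ℝ) (ht : ∀ i, 0 < t i)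
    (h2 : nrmR x * nrmR y - dotR x y < 2)
    (S : Matrix (Fin n) (Fin n) ℝ)
    (hS : S = Matrix.diagonal t *
      (1 + (1 / 2 : ℝ) • (Matrix.vecMulVec x y + Matrix.vecMulVec y x)) * Matrix.diagonal t)
    (c : ℝ) (hc : c = 1 + dotR x y - (1 / 4) * (dotR x x * dotR y y - dotR x y ^ 2)) :
    0 < c ∧ IsUnit S.det ∧
    S⁻¹ = (Matrix.diagonal t)⁻¹ *
      (1 - ((1 / (4 * c)) * (2 + dotR x y)) • (Matrix.vecMulVec x y + Matrix.vecMulVec y x)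
        + (1 / (4 * c)) • (dotR y y • Matrix.vecMulVec x x + dotR x x • Matrix.vecMulVec y y)) *
      (Matrix.diagonal t)⁻¹ := by
  have hN : 0 ≤ nrmR x * nrmR y := mul_nonneg (Real.sqrt_nonneg _) (Real.sqrt_nonneg _)
  have hx : nrmR x ^ 2 = dotR x x :=
    Real.sq_sqrt (Finset.sum_nonneg fun i _ => mul_self_nonneg (x i))
  have hy : nrmR y ^ 2 = dotR y y :=
    Real.sq_sqrt (Finset.sum_nonneg fun i _ => mul_self_nonneg (y i))
  have hcpos : 0 < c := by
    have h : c = (1 + dotR x y / 2 - nrmR x * nrmR y / 2) *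
        (1 + dotR x y / 2 + nrmR x * nrmR y / 2) := by
      rw [hc, ← hx, ← hy]; ring
    rw [h]
    exact mul_pos (by linarith) (by linarith)
  have hcore := core_mul x y c (1 / (4 * c)) hc (by field_simp)
  have hD : IsUnit (Matrix.diagonal t).det := by
    rw [Matrix.det_diagonal]
    exact (Finset.prod_pos fun i _ => ht i).ne'.isUnit
  have hmul : S * ((Matrix.diagonal t)⁻¹ *
      (1 - ((1 / (4 * c)) * (2 + dotR x y)) • (Matrix.vecMulVec x y + Matrix.vecMulVec y x)
        + (1 / (4 * c)) • (dotR y y • Matrix.vecMulVec x x + dotR x x • Matrix.vecMulVec y y)) *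
      (Matrix.diagonal t)⁻¹) = 1 := by
    rw [hS]
    generalize (1 - ((1 / (4 * c)) * (2 + dotR x y)) • (Matrix.vecMulVec x y + Matrix.vecMulVec y x)
        + (1 / (4 * c)) • (dotR y y • Matrix.vecMulVec x x + dotR x x • Matrix.vecMulVec y y)) = K
      at hcore ⊢
    generalize (1 + (1 / 2 : ℝ) • (Matrix.vecMulVec x y + Matrix.vecMulVec y x)) = M at hcore ⊢
    rw [Matrix.mul_assoc (Matrix.diagonal t * M), Matrix.mul_assoc _ K,
      Matrix.mul_nonsing_inv_cancel_left _ _ hD, Matrix.mul_assoc, ← Matrix.mul_assoc M, hcore,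
      Matrix.one_mul, Matrix.mul_nonsing_inv _ hD]
  exact ⟨hcpos, Matrix.isUnit_det_of_right_inverse hmul, Matrix.inv_eq_right_inv hmul⟩
end

section
/- Let D = diag(d₁,…,d_n) and Δ = diag(δ₁,…,δ_n) be positive diagonal n×n matrices and X ∈ Sym(n). For t ∈ [0,1] let γ(t) = ((1−t)√D + t√Δ)², so γ(t) is the positive diagonal matrix with entries γ_i(t) = ((1−t)√d_i + t√δ_i)². Define the symmetric-matrix-valued curve X(t) by X(t)_{ij} = √((γ_i(t) + γ_j(t))/(d_i + d_j))·X_{ij}, let X⁰(t) be the symmetric matrix with entries X⁰(t)_{ij} = X(t)_{ij}/(γ_i(t) + γ_j(t)) (so X(t) = γ(t)X⁰(t) + X⁰(t)γ(t)), and let γ̇⁰(t) = ½·γ̇(t)·γ(t)⁻¹. Then X(0) = X, X(1)_{ij} = √((δ_i + δ_j)/(d_i + d_j))·X_{ij}, and for all t ∈ [0,1] the curve satisfies the Bures–Wasserstein parallel-transport equation Ẋ(t) = γ̇⁰(t)γ(t)X⁰(t) + X⁰(t)γ(t)γ̇⁰(t), i.e. Ẋ(t) − (γ̇⁰(t)γ(t)X⁰(t)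 + X⁰(t)γ(t)γ̇⁰(t)) = 0. (This is the geodesic parallel transport of the Bures–Wasserstein metric from D to Δ along the Bures–Wasserstein geodesic γ between the commuting matrices D and Δ.) -/
open Matrix Finset

/-- geodesic parallel transport of the Bures–Wasserstein metric between the
commuting matrices `D = diag d` and `Δ = diag δ` along the Bures–Wasserstein geodesic
`γ(t) = ((1−t)√D + t√Δ)²`: the field `X(t)_{ij} = √((γ_i(t)+γ_j(t))/(d_i+d_j)) X_{ij}`
satisfies `X(0) = X`, `X(1)_{ij} = √((δ_i+δ_j)/(d_i+d_j)) X_{ij}`, `X(t) = γX⁰ + X⁰γ`,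
and the parallel-transport equation `Ẋ = γ̇⁰γX⁰ + X⁰γγ̇⁰` on `[0,1]`,
where `γ̇⁰(t) = ½ γ̇(t) γ(t)⁻¹`. -/
theorem bures_wasserstein_parallel_transport_commuting (n : ℕ) (d δ : Fin n → ℝ)
    (hd : ∀ i, 0 < d i) (hδ : ∀ i, 0 < δ i)
    (X : Matrix (Fin n) (Fin n) ℝ) (hX : X.IsSymm)
    (γf : Fin n → ℝ → ℝ)
    (hγf : ∀ i s, γf i s = ((1 - s) * Real.sqrt (d i) + s * Real.sqrt (δ i)) ^ 2)
    (γ : ℝ → Matrix (Fin n) (Fin n) ℝ) (hγ : ∀ s, γ s = Matrix.diagonal (fun i => γf i s))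
    (Xc : ℝ → Matrix (Fin n) (Fin n) ℝ)
    (hXc : ∀ s i j, Xc s i j = Real.sqrt ((γf i s + γf j s) / (d i + d j)) * X i j)
    (X0 : ℝ → Matrix (Fin n) (Fin n) ℝ)
    (hX0 : ∀ s i j, X0 s i j = Xc s i j / (γf i s + γf j s))
    (γd : ℝ → Matrix (Fin n) (Fin n) ℝ)
    (hγd : ∀ s, γd s = Matrix.diagonal (fun i =>
      2 * ((1 - s) * Real.sqrt (d i) + s * Real.sqrt (δ i)) *
        (Real.sqrt (δ i) - Real.sqrt (d i))))
    (γd0 : ℝ → Matrix (Fin n) (Fin n) ℝ)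
    (hγd0 : ∀ s, γd0 s = (1 / 2 : ℝ) • (γd s * (γ s)⁻¹)) :
    (Xc 0 = X) ∧
    (∀ i j, Xc 1 i j = Real.sqrt ((δ i + δ j) / (d i + d j)) * X i j) ∧
    (∀ i, ∀ s : ℝ, HasDerivAt (γf i)
      (2 * ((1 - s) * Real.sqrt (d i) + s * Real.sqrt (δ i)) *
        (Real.sqrt (δ i) - Real.sqrt (d i))) s) ∧
    (∀ s ∈ Set.Icc (0 : ℝ) 1, Xc s = γ s * X0 s + X0 s * γ s) ∧
    (∀ s ∈ Set.Icc (0 : ℝ) 1, ∀ i j,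
      HasDerivAt (fun u => Xc u i j)
        ((γd0 s * γ s * X0 s + X0 s * γ s * γd0 s) i j) s) := by
  have hpos : ∀ s ∈ Set.Icc (0 : ℝ) 1, ∀ i, 0 < γf i s := by
    intro s hs i
    rw [hγf]
    have h1 := Real.sqrt_pos.2 (hd i)
    have h2 := Real.sqrt_pos.2 (hδ i)
    apply pow_pos
    rcases eq_or_lt_of_le hs.1 with h | h
    · rw [← h]; simpa using h1
    · have := mul_pos h h2
      have := mul_nonneg (sub_nonneg.2 hs.2) h1.le
      linarith
  have hder : ∀ i, ∀ s : ℝ, HasDerivAt (γf i)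
      (2 * ((1 - s) * Real.sqrt (d i) + s * Real.sqrt (δ i)) *
        (Real.sqrt (δ i) - Real.sqrt (d i))) s := by
    intro i s
    have h0 : γf i = fun s => ((1 - s) * Real.sqrt (d i) + s * Real.sqrt (δ i)) ^ 2 :=
      funext (hγf i)
    rw [h0]
    have h := (((((hasDerivAt_id s).const_sub 1).mul_const (Real.sqrt (d i))).add
      ((hasDerivAt_id s).mul_const (Real.sqrt (δ i)))).pow 2)
    refine h.congr_deriv ?_
    simp only [Pi.add_apply, id, Nat.cast_ofNat]
    ring
  refine ⟨?_, ?_, hder, ?_, ?_⟩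
  · ext i j
    have := hd i
    have := hd j
    have h : d i + d j ≠ 0 := by positivity
    rw [hXc, hγf, hγf]
    simp [Real.sq_sqrt (hd i).le, Real.sq_sqrt (hd j).le, div_self h]
  · intro i j
    rw [hXc, hγf, hγf]
    simp [Real.sq_sqrt (hδ i).le, Real.sq_sqrt (hδ j).le]
  · intro s hs
    ext i j
    have := hpos s hs i
    have := hpos s hs j
    rw [hγ, Matrix.add_apply, Matrix.diagonal_mul, Matrix.mul_diagonal, hX0]
    field_simp
  · intro s hs i j
    have hi := hpos s hs i
    have hj := hpos s hs j
    have hdi := hd i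
    have hdj := hd j
    have hu : IsUnit (γ s).det := by
      rw [hγ, Matrix.det_diagonal]
      exact (Finset.prod_pos fun i _ => hpos s hs i).ne'.isUnit
    have e1 : γd0 s * γ s = (1 / 2 : ℝ) • γd s := by
      rw [hγd0, Matrix.smul_mul, Matrix.mul_assoc, Matrix.nonsing_inv_mul _ hu, Matrix.mul_one]
    have e2 : γ s * γd0 s = (1 / 2 : ℝ) • γd s := by
      have hc : γ s * γd s = γd s * γ s := by
        rw [hγ, hγd, Matrix.diagonal_mul_diagonal, Matrix.diagonal_mul_diagonal]
        simp only [mul_comm]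
      rw [hγd0, Matrix.mul_smul, ← Matrix.mul_assoc, hc, Matrix.mul_assoc,
        Matrix.mul_nonsing_inv _ hu, Matrix.mul_one]
    rw [Matrix.mul_assoc (X0 s), e1, e2, Matrix.smul_mul, Matrix.mul_smul, hγd,
      Matrix.add_apply, Matrix.smul_apply, Matrix.smul_apply, Matrix.diagonal_mul,
      Matrix.mul_diagonal, hX0, hXc]
    have hf : (fun u => Xc u i j) =
        fun u => Real.sqrt ((γf i u + γf j u) / (d i + d j)) * X i j :=
      funext fun u => hXc u i j
    rw [hf]
    have hq : 0 < (γf i s + γf j s) / (d i + d j) := by positivity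
    have h := ((((hder i s).add (hder j s)).div_const (d i + d j)).sqrt hq.ne').mul_const (X i j)
    refine h.congr_deriv ?_
    simp only [Pi.add_apply, smul_eq_mul]
    have hr := Real.sqrt_pos.2 hq
    have hr2 := Real.sq_sqrt hq.le
    generalize Real.sqrt ((γf i s + γf j s) / (d i + d j)) = r at *
    have hQ : γf i s + γf j s = r ^ 2 * (d i + d j) := by rw [hr2]; field_simp
    rw [hQ]
    have hc : d i + d j ≠ 0 := by positivity
    field_simp
end
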